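/- arXiv:1804.04951 — 7 statements merged into one kernel-verified Lean document; each statement's English description precedes it below -/
import Mathlib

section
/- Let φ : V → W be a linear map between finite-dimensional real vector spaces and D_W a linear Dirac structure on W. Then the backward B φ(D_W) = {(v, φ*(w*)) ∈ V ⊕ V* : (φ(v), w*) ∈ D_W} is a linear Dirac structure on V. -/
open Module

def pairLR {V : Type*} [AddCommGroup V] [Module ℝ V]
    (x y : V × Module.Dual ℝ V) : ℝ := x.2 y.1 + y.2 x.1

def orthSet {V : Type*} [AddCommGroup V] [Module ℝ V]
    (D : Submodule ℝ (V × Module.Dual ℝ V)) : Set (V × Module.Dual ℝ V) :=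
  {x | ∀ y ∈ D, pairLR x y = 0}

def IsDirac {V : Type*} [AddCommGroup V] [Module ℝ V]
    (D : Submodule ℝ (V × Module.Dual ℝ V)) : Prop :=
  (D : Set (V × Module.Dual ℝ V)) = orthSet D

def backwardD {V W : Type*} [AddCommGroup V] [Module ℝ V] [AddCommGroup W] [Module ℝ W]
    (φ : V →ₗ[ℝ] W) (D : Submodule ℝ (W × Module.Dual ℝ W)) :
    Submodule ℝ (V × Module.Dual ℝ V) :=
  Submodule.map ((LinearMap.id : V →ₗ[ℝ] V).prodMap φ.dualMap)
    (Submodule.comap (φ.prodMap (LinearMap.id : Module.Dual ℝ W →ₗ[ℝ] Module.Dual ℝ W)) D)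

theorem stmt8 {V W : Type*} [AddCommGroup V] [Module ℝ V] [AddCommGroup W] [Module ℝ W]
    [FiniteDimensional ℝ V] [FiniteDimensional ℝ W]
    (φ : V →ₗ[ℝ] W) (D : Submodule ℝ (W × Module.Dual ℝ W)) (hD : IsDirac D) :
    IsDirac (backwardD φ D) := by
  have hD' : ∀ x, x ∈ D ↔ ∀ y ∈ D, pairLR x y = 0 := fun x => by
    have := Set.ext_iff.mp hD x
    simpa [orthSet] using this
  ext ⟨v, α⟩
  constructor
  · rintro ⟨⟨u, β⟩, h1, h2⟩
    rintro _ ⟨⟨u', β'⟩, h1', rfl⟩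
    rw [← h2]
    exact (hD' _).mp h1 _ h1'
  · intro h
    let k : V × Module.Dual ℝ W →ₗ[ℝ] W × Module.Dual ℝ W :=
      φ.prodMap (LinearMap.id : Module.Dual ℝ W →ₗ[ℝ] Module.Dual ℝ W)
    let f : Module.Dual ℝ (V × Module.Dual ℝ W) :=
      α.coprod (Module.Dual.eval ℝ W (φ v))
    have hf : f ∈ LinearMap.range (D.mkQ ∘ₗ k).dualMap := by
      rw [LinearMap.range_dualMap_eq_dualAnnihilator_ker, Submodule.mem_dualAnnihilator]
      rintro ⟨u, β⟩ hu
      have hu' : k (u, β) ∈ D := by simpa using hu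
      have := h (u, φ.dualMap β) ⟨(u, β), hu', rfl⟩
      simpa [pairLR, f] using this
    obtain ⟨g, hg⟩ := hf
    have hg' : ∀ u β, g (D.mkQ (φ u, β)) = α u + β (φ v) := fun u β => by
      have := LinearMap.congr_fun hg (u, β)
      simpa [f, k] using this
    let β : Module.Dual ℝ W := g ∘ₗ D.mkQ ∘ₗ LinearMap.inl ℝ W (Module.Dual ℝ W)
    refine ⟨(v, β), ?_, ?_⟩
    · change (φ v, β) ∈ D
      rw [hD']
      rintro ⟨w, γ⟩ hw
      have e1 : γ (φ v) = g (D.mkQ (0, γ)) := by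
        have := hg' 0 γ
        simp only [map_zero, zero_add] at this
        exact this.symm
      have e2 : D.mkQ (w, γ) = 0 := by simpa using hw
      change g (D.mkQ (w, 0)) + γ (φ v) = 0
      rw [e1, ← map_add, ← map_add, Prod.mk_add_mk, add_zero, zero_add, e2, map_zero]
    · refine Prod.ext rfl ?_
      ext u
      have := hg' u 0
      simp only [LinearMap.zero_apply, add_zero] at this
      exact this
end

section
/- Let φ : V → W be a linear map between finite-dimensional real vector spaces and D_V a linear Dirac structure on V. Then the forward F φ(D_V) = {(φ(v), w*) ∈ W ⊕ W* : (v, φ*(w*)) ∈ D_V} is a linear Dirac structure on W. -/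
open Module

def forwardD {V W : Type*} [AddCommGroup V] [Module ℝ V] [AddCommGroup W] [Module ℝ W]
    (φ : V →ₗ[ℝ] W) (D : Submodule ℝ (V × Module.Dual ℝ V)) :
    Submodule ℝ (W × Module.Dual ℝ W) :=
  Submodule.map (φ.prodMap (LinearMap.id : Module.Dual ℝ W →ₗ[ℝ] Module.Dual ℝ W))
    (Submodule.comap ((LinearMap.id : V →ₗ[ℝ] V).prodMap φ.dualMap) D)

theorem stmt9 {V W : Type*} [AddCommGroup V] [Module ℝ V] [AddCommGroup W] [Module ℝ W]
    [FiniteDimensional ℝ V] [FiniteDimensional ℝ W]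
    (φ : V →ₗ[ℝ] W) (D : Submodule ℝ (V × Module.Dual ℝ V)) (hD : IsDirac D) :
    IsDirac (forwardD φ D) := by
  have hD' : ∀ x, x ∈ D ↔ ∀ y ∈ D, pairLR x y = 0 := fun x => by
    have h : x ∈ (D : Set (V × Module.Dual ℝ V)) ↔ x ∈ orthSet D := by
      rw [← show (D : Set (V × Module.Dual ℝ V)) = orthSet D from hD]
    exact h
  unfold IsDirac
  ext ⟨w, β⟩
  constructor
  · rintro ⟨⟨v, β'⟩, hv, he⟩ y ⟨⟨v', γ⟩, hv', rfl⟩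
    simp only [LinearMap.prodMap_apply, LinearMap.id_apply, Prod.mk.injEq] at he
    obtain ⟨rfl, rfl⟩ := he
    exact (hD' _).1 hv _ hv'
  · intro h
    let T : (D × Module.Dual ℝ W) →ₗ[ℝ] Module.Dual ℝ V :=
      ((LinearMap.snd ℝ V (Module.Dual ℝ V)).comp D.subtype).coprod (-φ.dualMap)
    let f : Module.Dual ℝ (D × Module.Dual ℝ W) :=
      (((β.comp φ).comp (LinearMap.fst ℝ V (Module.Dual ℝ V))).comp D.subtype).coprod
        (Module.Dual.eval ℝ W w)
    have hf : f ∈ LinearMap.range T.dualMap := by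
      have hr := LinearMap.range_dualMap_eq_dualAnnihilator_ker (K := ℝ)
        (V₁ := D × Module.Dual ℝ W) (V₂ := Module.Dual ℝ V) T
      refine hr.ge ((Submodule.mem_dualAnnihilator _).2 ?_)
      rintro ⟨⟨⟨v, α⟩, hv⟩, γ⟩ hk
      have hk' : α + -(φ.dualMap γ) = 0 := hk
      have hα : α = φ.dualMap γ := by rwa [← sub_eq_add_neg, sub_eq_zero] at hk'
      subst hα
      exact h (φ v, γ) ⟨(v, γ), hv, rfl⟩
    obtain ⟨g, hg⟩ := hf
    obtain ⟨u, rfl⟩ := (Module.evalEquiv ℝ V).surjective g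
    have key : ∀ (v : V) (α : Module.Dual ℝ V) (_ : (v, α) ∈ D) (γ : Module.Dual ℝ W),
        α u + -(γ (φ u)) = β (φ v) + γ w := fun v α hv γ =>
      LinearMap.congr_fun hg (⟨(v, α), hv⟩, γ)
    refine ⟨(-u, β), ?_, ?_⟩
    · refine (hD' _).2 ?_
      rintro ⟨v, α⟩ hv
      have := key v α hv 0
      simp only [LinearMap.zero_apply, neg_zero, add_zero] at this
      change β (φ v) + α (-u) = 0
      rw [map_neg, this]; ring
    · have : φ (-u) = w := by
        rw [← sub_eq_zero, ← Module.forall_dual_apply_eq_zero_iff ℝ]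
        intro γ
        have := key 0 0 D.zero_mem γ
        simp only [LinearMap.zero_apply, map_zero, zero_add] at this
        rw [map_sub, map_neg, map_neg, this, sub_self]
      simp [this]
end

section
/- For linear maps φ₂ : U → V and φ₁ : V → W between finite-dimensional real vector spaces, the forward and backward operations on Dirac structures satisfy F(φ₁ ∘ φ₂) = F φ₁ ∘ F φ₂ and B(φ₁ ∘ φ₂) = B φ₂ ∘ B φ₁; i.e., for any Dirac structure D on U, F(φ₁∘φ₂)(D) = Fφ₁(Fφ₂(D)), and for any Dirac structure D' on W, B(φ₁∘φ₂)(D') = Bφ₂(Bφ₁(D')). -/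
open Module

theorem stmt10 {U V W : Type*} [AddCommGroup U] [Module ℝ U]
    [AddCommGroup V] [Module ℝ V] [AddCommGroup W] [Module ℝ W]
    [FiniteDimensional ℝ U] [FiniteDimensional ℝ V] [FiniteDimensional ℝ W]
    (φ₂ : U →ₗ[ℝ] V) (φ₁ : V →ₗ[ℝ] W) :
    (∀ D : Submodule ℝ (U × Module.Dual ℝ U), IsDirac D →
      forwardD (φ₁ ∘ₗ φ₂) D = forwardD φ₁ (forwardD φ₂ D)) ∧
    (∀ D' : Submodule ℝ (W × Module.Dual ℝ W), IsDirac D' →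
      backwardD (φ₁ ∘ₗ φ₂) D' = backwardD φ₂ (backwardD φ₁ D')) := by
  refine ⟨fun D _ => ?_, fun D _ => ?_⟩
  · ext ⟨w, ws⟩
    constructor
    · rintro ⟨⟨u, a⟩, h, e⟩
      obtain ⟨rfl, rfl⟩ := Prod.mk.inj e
      exact ⟨(φ₂ u, a), ⟨(u, φ₁.dualMap a), h, rfl⟩, rfl⟩
    · rintro ⟨⟨v, a⟩, ⟨⟨u, b⟩, h, e'⟩, e⟩
      obtain ⟨rfl, rfl⟩ := Prod.mk.inj e
      have h1 : φ₂ u = v := congrArg Prod.fst e'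
      have h2 : b = φ₁.dualMap a := congrArg Prod.snd e'
      clear e e'
      subst h1 h2
      exact ⟨(u, a), h, rfl⟩
  · ext ⟨w, ws⟩
    constructor
    · rintro ⟨⟨u, a⟩, h, e⟩
      obtain ⟨rfl, rfl⟩ := Prod.mk.inj e
      exact ⟨(u, φ₁.dualMap a), ⟨(φ₂ u, a), h, rfl⟩, rfl⟩
    · rintro ⟨⟨u, b⟩, ⟨⟨v, a⟩, h, e'⟩, e⟩
      obtain ⟨rfl, rfl⟩ := Prod.mk.inj e
      have h1 : v = φ₂ u := congrArg Prod.fst e'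
      have h2 : φ₁.dualMap a = b := congrArg Prod.snd e'
      clear e e'
      subst h1 h2
      exact ⟨(u, a), h, rfl⟩
end

section
/- Let φ : V → W be linear between finite-dimensional real vector spaces. If Σ ⊆ V ⊕ V* is isotropic (resp. coisotropic), then Fφ(Σ) = {(φv, w*) : (v, φ*w*) ∈ Σ} ⊆ W ⊕ W* is isotropic (resp. coisotropic). If Σ' ⊆ W ⊕ W* is isotropic (resp. coisotropic), then Bφ(Σ') = {(v, φ*w*) : (φv, w*) ∈ Σ'} ⊆ V ⊕ V* is isotropic (resp. coisotropic). -/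
open Module

theorem exists_orth_of_vanish {A X : Type*} [AddCommGroup A] [Module ℝ A]
    [AddCommGroup X] [Module ℝ X] [FiniteDimensional ℝ X]
    (L : A →ₗ[ℝ] X × Module.Dual ℝ X) (S : Submodule ℝ (X × Module.Dual ℝ X))
    (f : Module.Dual ℝ A) (hf : ∀ a, L a ∈ S → f a = 0) :
    ∃ x ∈ orthSet S, ∀ a, f a = pairLR x (L a) := by
  have h1 : f ∈ LinearMap.range (S.mkQ ∘ₗ L).dualMap := by
    rw [LinearMap.range_dualMap_eq_dualAnnihilator_ker, Submodule.mem_dualAnnihilator]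
    intro a ha
    apply hf
    simpa using ha
  obtain ⟨h, rfl⟩ := h1
  obtain ⟨x, hx⟩ := (Module.evalEquiv ℝ X).surjective
    (h ∘ₗ S.mkQ ∘ₗ LinearMap.inr ℝ X (Module.Dual ℝ X))
  have key : ∀ y : X × Module.Dual ℝ X,
      h (S.mkQ y) = pairLR (x, h ∘ₗ S.mkQ ∘ₗ LinearMap.inl ℝ X (Module.Dual ℝ X)) y := by
    rintro ⟨y, η⟩
    have h2 : η x = h (S.mkQ (0, η)) := by
      have := congrArg (fun k => k η) hx
      simpa using this
    have h3 : ((y, η) : X × Module.Dual ℝ X) = (y, 0) + (0, η) := by simp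
    rw [h3, map_add, map_add]
    simp [pairLR, h2]
  refine ⟨_, ?_, fun a => key (L a)⟩
  intro y hy
  rw [← key, (Submodule.Quotient.mk_eq_zero S).2 hy |> (fun e => (e : S.mkQ y = 0)), map_zero]

theorem stmt14 {V W : Type*} [AddCommGroup V] [Module ℝ V] [AddCommGroup W] [Module ℝ W]
    [FiniteDimensional ℝ V] [FiniteDimensional ℝ W] (φ : V →ₗ[ℝ] W) :
    (∀ S₁ : Submodule ℝ (V × Module.Dual ℝ V),
      (((S₁ : Set (V × Module.Dual ℝ V)) ⊆ orthSet S₁) →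
        ((forwardD φ S₁ : Set (W × Module.Dual ℝ W)) ⊆ orthSet (forwardD φ S₁))) ∧
      ((orthSet S₁ ⊆ (S₁ : Set (V × Module.Dual ℝ V))) →
        (orthSet (forwardD φ S₁) ⊆ (forwardD φ S₁ : Set (W × Module.Dual ℝ W))))) ∧
    (∀ S₂ : Submodule ℝ (W × Module.Dual ℝ W),
      (((S₂ : Set (W × Module.Dual ℝ W)) ⊆ orthSet S₂) →
        ((backwardD φ S₂ : Set (V × Module.Dual ℝ V)) ⊆ orthSet (backwardD φ S₂))) ∧
      ((orthSet S₂ ⊆ (S₂ : Set (W × Module.Dual ℝ W))) →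
        (orthSet (backwardD φ S₂) ⊆ (backwardD φ S₂ : Set (V × Module.Dual ℝ V))))) := by
  refine ⟨fun S => ⟨?_, ?_⟩, fun S => ⟨?_, ?_⟩⟩
  · rintro h _ ⟨⟨v, α⟩, hv, rfl⟩ _ ⟨⟨u, β⟩, hu, rfl⟩
    simpa [pairLR] using h hv _ hu
  · rintro h ⟨w, β⟩ hw
    obtain ⟨⟨v, γ⟩, hx, hxa⟩ := exists_orth_of_vanish
      ((LinearMap.id : V →ₗ[ℝ] V).prodMap φ.dualMap) S
      ((β ∘ₗ φ).coprod (Module.Dual.eval ℝ W w))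
      (fun a ha => by
        have := hw _ ⟨a, ha, rfl⟩
        simpa [pairLR] using this)
    have e1 : γ = φ.dualMap β := by
      ext u
      have := hxa (u, 0)
      simpa [pairLR] using this.symm
    have e2 : φ v = w := by
      rw [← sub_eq_zero, ← Module.forall_dual_apply_eq_zero_iff ℝ]
      intro α
      have := hxa (0, α)
      simp [pairLR] at this
      simp [this]
    refine ⟨(v, β), ?_, by simp [e2]⟩
    have := h hx
    rw [e1] at this
    exact this
  · rintro h _ ⟨⟨v, α⟩, hv, rfl⟩ _ ⟨⟨u, β⟩, hu, rfl⟩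
    simpa [pairLR] using h hv _ hu
  · rintro h ⟨v, γ⟩ hv
    obtain ⟨⟨w, β⟩, hx, hxa⟩ := exists_orth_of_vanish
      (φ.prodMap (LinearMap.id : Module.Dual ℝ W →ₗ[ℝ] Module.Dual ℝ W)) S
      (γ.coprod (Module.Dual.eval ℝ W (φ v)))
      (fun a ha => by
        have := hv _ ⟨a, ha, rfl⟩
        simpa [pairLR] using this)
    have e1 : φ.dualMap β = γ := by
      ext u
      have := hxa (u, 0)
      simpa [pairLR] using this.symm
    have e2 : φ v = w := by
      rw [← sub_eq_zero, ← Module.forall_dual_apply_eq_zero_iff ℝ]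
      intro α
      have := hxa (0, α)
      simp [pairLR] at this
      simp [this]
    refine ⟨(v, β), ?_, by simp [e1]⟩
    have := h hx
    rw [← e2] at this
    exact this
end

section
/- Let U₁, U₂, V₁, V₂ be finite-dimensional real vector spaces with Dirac structures D_A on U₁ × U₂, D_B on V₁ × V₂, and D_I on U₂ × V₂. Define φ(u₁,u₂,v₁,v₂) = (u₁,u₂,u₂,v₂,v₁,v₂) and ψ(u₁,u₂,v₁,v₂) = (u₁,v₁). Then the composition (Fψ ∘ Bφ)(D_A × D_I × D_B) equals {(u₁,v₁,α₁,β₁) : ∃(u₂,v₂,α₂,β₂) with (u₂,v₂,−α₂,−β₂) ∈ D_I, (u₁,u₂,α₁,α₂) ∈ D_A, (v₁,v₂,β₁,β₂) ∈ D_B}. -/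
open Module

def prodDirac {V W : Type*} [AddCommGroup V] [Module ℝ V] [AddCommGroup W] [Module ℝ W]
    (D₁ : Submodule ℝ (V × Module.Dual ℝ V)) (D₂ : Submodule ℝ (W × Module.Dual ℝ W)) :
    Submodule ℝ ((V × W) × Module.Dual ℝ (V × W)) :=
  Submodule.comap
    (LinearMap.prod
      (LinearMap.prod
        ((LinearMap.fst ℝ V W).comp (LinearMap.fst ℝ (V × W) (Module.Dual ℝ (V × W))))
        (((LinearMap.inl ℝ V W).dualMap).comp (LinearMap.snd ℝ (V × W) (Module.Dual ℝ (V × W)))))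
      (LinearMap.prod
        ((LinearMap.snd ℝ V W).comp (LinearMap.fst ℝ (V × W) (Module.Dual ℝ (V × W))))
        (((LinearMap.inr ℝ V W).dualMap).comp (LinearMap.snd ℝ (V × W) (Module.Dual ℝ (V × W))))))
    (D₁.prod D₂)


section
variable (U₁ U₂ V₁ V₂ : Type*) [AddCommGroup U₁] [Module ℝ U₁] [AddCommGroup U₂] [Module ℝ U₂]
  [AddCommGroup V₁] [Module ℝ V₁] [AddCommGroup V₂] [Module ℝ V₂]

/-- φ(u₁,u₂,v₁,v₂) = (u₁,u₂,u₂,v₂,v₁,v₂) -/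
def phiMap : ((U₁ × U₂) × (V₁ × V₂)) →ₗ[ℝ] ((U₁ × U₂) × ((U₂ × V₂) × (V₁ × V₂))) :=
  (LinearMap.fst ℝ (U₁ × U₂) (V₁ × V₂)).prod
    (((((LinearMap.snd ℝ U₁ U₂).comp (LinearMap.fst ℝ (U₁ × U₂) (V₁ × V₂))).prod
        ((LinearMap.snd ℝ V₁ V₂).comp (LinearMap.snd ℝ (U₁ × U₂) (V₁ × V₂)))).prod
      (LinearMap.snd ℝ (U₁ × U₂) (V₁ × V₂))))

/-- ψ(u₁,u₂,v₁,v₂) = (u₁,v₁) -/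
def psiMap : ((U₁ × U₂) × (V₁ × V₂)) →ₗ[ℝ] (U₁ × V₁) :=
  ((LinearMap.fst ℝ U₁ U₂).comp (LinearMap.fst ℝ (U₁ × U₂) (V₁ × V₂))).prod
    ((LinearMap.fst ℝ V₁ V₂).comp (LinearMap.snd ℝ (U₁ × U₂) (V₁ × V₂)))

theorem mem_of_dual_eq {V : Type*} [AddCommGroup V] [Module ℝ V]
    {D : Submodule ℝ (V × Module.Dual ℝ V)} {v : V} {a b : Module.Dual ℝ V}
    (h : (v, a) ∈ D) (e : ∀ x, b x = a x) : (v, b) ∈ D := by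
  have : b = a := LinearMap.ext e
  rw [this]; exact h

theorem stmt15 [FiniteDimensional ℝ U₁] [FiniteDimensional ℝ U₂]
    [FiniteDimensional ℝ V₁] [FiniteDimensional ℝ V₂]
    (DA : Submodule ℝ ((U₁ × U₂) × Module.Dual ℝ (U₁ × U₂)))
    (DI : Submodule ℝ ((U₂ × V₂) × Module.Dual ℝ (U₂ × V₂)))
    (DB : Submodule ℝ ((V₁ × V₂) × Module.Dual ℝ (V₁ × V₂)))
    (hA : IsDirac DA) (hI : IsDirac DI) (hB : IsDirac DB)
    (u₁ : U₁) (v₁ : V₁) (α₁ : Module.Dual ℝ U₁) (β₁ : Module.Dual ℝ V₁) :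
    ((u₁, v₁), Module.dualProdDualEquivDual ℝ U₁ V₁ (α₁, β₁)) ∈
      forwardD (psiMap U₁ U₂ V₁ V₂)
        (backwardD (phiMap U₁ U₂ V₁ V₂) (prodDirac DA (prodDirac DI DB))) ↔
    ∃ (u₂ : U₂) (v₂ : V₂) (α₂ : Module.Dual ℝ U₂) (β₂ : Module.Dual ℝ V₂),
      ((u₂, v₂), Module.dualProdDualEquivDual ℝ U₂ V₂ (-α₂, -β₂)) ∈ DI ∧
      ((u₁, u₂), Module.dualProdDualEquivDual ℝ U₁ U₂ (α₁, α₂)) ∈ DA ∧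
      ((v₁, v₂), Module.dualProdDualEquivDual ℝ V₁ V₂ (β₁, β₂)) ∈ DB := by
  constructor
  · rintro ⟨⟨⟨⟨a, u₂⟩, ⟨b, v₂⟩⟩, w⟩, hx, he⟩
    obtain ⟨⟨y, γ⟩, hy, hyx⟩ := hx
    simp only [LinearMap.prodMap_apply, LinearMap.id_apply, Prod.mk.injEq] at he hyx
    obtain ⟨he1, rfl⟩ := he
    obtain ⟨rfl, hγ⟩ := hyx
    obtain ⟨rfl, rfl⟩ : a = u₁ ∧ b = v₁ := Prod.mk.inj he1
    obtain ⟨h1, h2, h3⟩ := hy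
    replace h1 : ((a, u₂), γ.comp (LinearMap.inl ℝ _ _)) ∈ DA := h1
    replace h2 : ((u₂, v₂), γ.comp ((LinearMap.inr ℝ _ _).comp (LinearMap.inl ℝ _ _))) ∈ DI := h2
    replace h3 : ((b, v₂), γ.comp ((LinearMap.inr ℝ _ _).comp (LinearMap.inr ℝ _ _))) ∈ DB := h3
    have key : ∀ (p : U₁) (q : U₂) (r : V₁) (s : V₂),
        γ ((p, q), ((q, s), (r, s))) = α₁ p + β₁ r := by
      intro p q r s
      have := LinearMap.congr_fun hγ ((p, q), (r, s))
      simpa [phiMap, psiMap] using this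
    refine ⟨u₂, v₂, γ.comp ((LinearMap.inl ℝ _ _).comp (LinearMap.inr ℝ _ _)),
      γ.comp ((LinearMap.inr ℝ _ _).comp ((LinearMap.inr ℝ _ _).comp (LinearMap.inr ℝ _ _))),
      ?_, ?_, ?_⟩
    · refine mem_of_dual_eq h2 fun ⟨q, s⟩ => ?_
      have h := key 0 q 0 s
      have e : (((0, q), ((q, s), (0, s))) : (U₁ × U₂) × ((U₂ × V₂) × (V₁ × V₂))) =
        ((0, q), 0) + (0, ((q, s), 0)) + (0, (0, (0, s))) := by simp
      rw [e, map_add, map_add] at h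
      simp at h ⊢
      linarith
    · refine mem_of_dual_eq h1 fun ⟨p, q⟩ => ?_
      have h := key p 0 0 0
      have e : (((p, q), 0) : (U₁ × U₂) × ((U₂ × V₂) × (V₁ × V₂))) =
        ((p, 0), ((0, 0), (0, 0))) + ((0, q), 0) := by (simp; rfl)
      simp
      rw [e, map_add, h]
      simp
    · refine mem_of_dual_eq h3 fun ⟨r, s⟩ => ?_
      have h := key 0 0 r 0
      have e : ((0, (0, (r, s))) : (U₁ × U₂) × ((U₂ × V₂) × (V₁ × V₂))) =
        ((0, 0), ((0, 0), (r, 0))) + (0, (0, (0, s))) := by (simp; exact ⟨rfl, rfl⟩)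
      simp
      rw [e, map_add, h]
      simp
  · rintro ⟨u₂, v₂, α₂, β₂, h2, h1, h3⟩
    refine ⟨(((u₁, u₂), (v₁, v₂)), _), ⟨(_, Module.dualProdDualEquivDual ℝ _ _
      (Module.dualProdDualEquivDual ℝ U₁ U₂ (α₁, α₂), Module.dualProdDualEquivDual ℝ _ _
        (Module.dualProdDualEquivDual ℝ U₂ V₂ (-α₂, -β₂),
          Module.dualProdDualEquivDual ℝ V₁ V₂ (β₁, β₂)))), ⟨?_, ?_, ?_⟩, Prod.ext rfl ?_⟩, rfl⟩
    · refine mem_of_dual_eq h1 fun ⟨p, q⟩ => ?_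
      simp
    · refine mem_of_dual_eq h2 fun ⟨p, q⟩ => ?_
      simp
    · refine mem_of_dual_eq h3 fun ⟨p, q⟩ => ?_
      simp
    · refine LinearMap.ext fun ⟨⟨p, q⟩, ⟨r, s⟩⟩ => ?_
      simp [phiMap, psiMap]
      try ring

end
end

section
/- Let Λ be a skew bivector on a finite-dimensional real vector space U₁, D₁ = graph(♯_Λ) the associated Dirac structure, g : U₂ → U₁ linear, D₂ = U₂ ⊕ {0}, and Φ(u₁,u₂) = u₁ + g(u₂). Then the forward Dirac structure D = FΦ(D₁ × D₂) equals {(u₁, α₁) : u₁ − ♯_Λ(α₁) ∈ Im g and α₁ ∈ (Im g)°}. In particular the projection of D to U₁* equals (Im g)° and its projection to U₁ equals ♯_Λ((Im g)°) + Im g. -/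
open Module

theorem stmt16 {U₁ U₂ : Type*} [AddCommGroup U₁] [Module ℝ U₁] [AddCommGroup U₂] [Module ℝ U₂]
    [FiniteDimensional ℝ U₁] [FiniteDimensional ℝ U₂]
    (Λ : Module.Dual ℝ U₁ →ₗ[ℝ] Module.Dual ℝ U₁ →ₗ[ℝ] ℝ)
    (hΛ : ∀ α β : Module.Dual ℝ U₁, Λ α β = - Λ β α)
    (sharp : Module.Dual ℝ U₁ →ₗ[ℝ] U₁)
    (hsharp : ∀ α β : Module.Dual ℝ U₁, β (sharp α) = Λ β α)
    (g : U₂ →ₗ[ℝ] U₁) :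
    let D₁ := LinearMap.range (sharp.prod (LinearMap.id : Module.Dual ℝ U₁ →ₗ[ℝ] Module.Dual ℝ U₁));
    let D₂ := (⊤ : Submodule ℝ U₂).prod (⊥ : Submodule ℝ (Module.Dual ℝ U₂));
    let Φ := (LinearMap.id : U₁ →ₗ[ℝ] U₁).coprod g;
    let D := forwardD Φ (prodDirac D₁ D₂);
    (∀ (u₁ : U₁) (α₁ : Module.Dual ℝ U₁), (u₁, α₁) ∈ D ↔
      (u₁ - sharp α₁ ∈ LinearMap.range g ∧ α₁ ∈ (LinearMap.range g).dualAnnihilator)) ∧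
    (∀ α₁ : Module.Dual ℝ U₁, (∃ u₁, (u₁, α₁) ∈ D) ↔
      α₁ ∈ (LinearMap.range g).dualAnnihilator) ∧
    (∀ u₁ : U₁, (∃ α₁, (u₁, α₁) ∈ D) ↔
      u₁ ∈ Submodule.map sharp (LinearMap.range g).dualAnnihilator ⊔ LinearMap.range g) := by
  intro D₁ D₂ Φ D
  have key : ∀ (u₁ : U₁) (α₁ : Module.Dual ℝ U₁), (u₁, α₁) ∈ D ↔
      (u₁ - sharp α₁ ∈ LinearMap.range g ∧ α₁ ∈ (LinearMap.range g).dualAnnihilator) := by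
    intro u α
    have hl : (LinearMap.inl ℝ U₁ U₂).dualMap (Φ.dualMap α) = α := by
      ext x; simp [Φ]
    have hr : (LinearMap.inr ℝ U₁ U₂).dualMap (Φ.dualMap α) = α.comp g := by
      ext x; simp [Φ]
    have hann : α ∈ (LinearMap.range g).dualAnnihilator ↔ α.comp g = 0 := by
      rw [Submodule.mem_dualAnnihilator]
      constructor
      · intro h
        ext x
        exact h _ ⟨x, rfl⟩
      · rintro h _ ⟨x, rfl⟩
        exact LinearMap.congr_fun h x
    rw [hann]
    constructor
    · rintro ⟨⟨⟨a, b⟩, β⟩, ⟨⟨γ, h1⟩, -, h2⟩, h3⟩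
      have hβ : β = α := congrArg Prod.snd h3
      subst hβ
      have hu : a + g b = u := congrArg Prod.fst h3
      have e1 : sharp γ = a := congrArg Prod.fst h1
      have e2 : γ = (LinearMap.inl ℝ U₁ U₂).dualMap (Φ.dualMap β) := congrArg Prod.snd h1
      have e3 : (LinearMap.inr ℝ U₁ U₂).dualMap (Φ.dualMap β) = 0 := h2
      rw [hl] at e2
      rw [hr] at e3
      refine ⟨⟨b, ?_⟩, e3⟩
      rw [← hu, ← e1, e2]
      abel
    · rintro ⟨⟨b, hb⟩, h0⟩
      refine ⟨((sharp α, b), α), ⟨⟨α, Prod.ext rfl hl.symm⟩, trivial, hr.trans h0⟩, ?_⟩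
      refine Prod.ext ?_ rfl
      change sharp α + g b = u
      rw [hb]
      abel
  refine ⟨key, fun α => ?_, fun u => ?_⟩
  · constructor
    · rintro ⟨u, h⟩
      exact ((key u α).1 h).2
    · intro h
      exact ⟨sharp α, (key _ _).2 ⟨by simp, h⟩⟩
  · rw [Submodule.mem_sup]
    constructor
    · rintro ⟨α, h⟩
      obtain ⟨h1, h2⟩ := (key u α).1 h
      exact ⟨sharp α, ⟨α, h2, rfl⟩, _, h1, by abel⟩
    · rintro ⟨_, ⟨α, h, rfl⟩, z, hz, rfl⟩
      exact ⟨α, (key _ _).2 ⟨by simpa using hz, h⟩⟩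
end

section
/- Let ω be a skew-symmetric bilinear form on a finite-dimensional real vector space U₁ with D₁ = graph(ω^♭), let p : U₁ → U₂ be linear with D₂ = {0} ⊕ U₂*, and define Ψ : U₁ → U₁ × U₂ by Ψ(u₁) = (u₁, p(u₁)). Then the backward Dirac structure D = BΨ(D₁ × D₂) equals {(u₁,α₁) : u₁ ∈ ker p and ω^♭(u₁) − α₁ ∈ (ker p)°}; i.e., D is the Dirac structure determined by the subspace ker p and the restriction of ω to ker p. -/
open Module

theorem stmt17 {U₁ U₂ : Type*} [AddCommGroup U₁] [Module ℝ U₁] [AddCommGroup U₂] [Module ℝ U₂]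
    [FiniteDimensional ℝ U₁] [FiniteDimensional ℝ U₂]
    (ω : U₁ →ₗ[ℝ] Module.Dual ℝ U₁) (hskew : ∀ u v : U₁, ω u v = - ω v u)
    (p : U₁ →ₗ[ℝ] U₂) :
    ∀ (u₁ : U₁) (α₁ : Module.Dual ℝ U₁),
      (u₁, α₁) ∈ backwardD ((LinearMap.id : U₁ →ₗ[ℝ] U₁).prod p)
        (prodDirac ω.graph ((⊥ : Submodule ℝ U₂).prod (⊤ : Submodule ℝ (Module.Dual ℝ U₂)))) ↔
      (u₁ ∈ LinearMap.ker p ∧ ω u₁ - α₁ ∈ (LinearMap.ker p).dualAnnihilator) := by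
  intro u₁ α₁
  have key : (u₁, α₁) ∈ backwardD ((LinearMap.id : U₁ →ₗ[ℝ] U₁).prod p)
        (prodDirac ω.graph ((⊥ : Submodule ℝ U₂).prod (⊤ : Submodule ℝ (Module.Dual ℝ U₂)))) ↔
      ∃ β : Module.Dual ℝ (U₁ × U₂), (β.comp (LinearMap.inl ℝ U₁ U₂) = ω u₁ ∧ p u₁ = 0) ∧
        β.comp ((LinearMap.id : U₁ →ₗ[ℝ] U₁).prod p) = α₁ := by
    constructor
    · rintro ⟨⟨u, β⟩, ⟨h1, h2, -⟩, h3⟩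
      obtain ⟨rfl, h4⟩ := Prod.mk.inj h3
      exact ⟨β, ⟨h1, h2⟩, h4⟩
    · rintro ⟨β, ⟨h1, h2⟩, h3⟩
      exact ⟨(u₁, β), ⟨h1, h2, trivial⟩, Prod.ext rfl h3⟩
  rw [key, ← LinearMap.range_dualMap_eq_dualAnnihilator_ker]
  constructor
  · rintro ⟨β, ⟨h1, h2⟩, rfl⟩
    refine ⟨h2, -(β.comp (LinearMap.inr ℝ U₁ U₂)), ?_⟩
    rw [← h1]
    ext v
    have h : β (v, p v) = β (v, 0) + β (0, p v) := by
      rw [← map_add]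
      simp
    simp [LinearMap.dualMap_apply, h]
  · rintro ⟨h2, γ, hγ⟩
    refine ⟨LinearMap.coprod (ω u₁) (-γ), ⟨?_, h2⟩, ?_⟩
    · ext v
      simp
    · ext v
      have h := LinearMap.congr_fun hγ v
      simp only [LinearMap.dualMap_apply, LinearMap.sub_apply] at h
      simp [h]
end
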